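/- arXiv:2407.08438 — 3 statements merged into one kernel-verified Lean document; each statement's English description precedes it below -/
import Mathlib

section
/- Let K be a number field and k ≥ 2 an integer. Then 𝕏_{K,k} equals the closure, in 𝒫(𝓞_K) ≅ {0,1}^{𝓞_K} with the product topology, of the orbit {t + V_{K,k} : t ∈ 𝓞_K} of the set V_{K,k} of k-free integers under the translation action of 𝓞_K. -/
open NumberField

/-- The product (Cantor) topology on the power set `𝒫(G) ≅ {0,1}^G`. -/
noncomputable instance powerSetTopology (G : Type*) : TopologicalSpace (Set G) :=
  TopologicalSpace.induced
    (fun (S : Set G) (g : G) => @decide (g ∈ S) (Classical.propDecidable _))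
    inferInstance

/-- The set of `k`-free integers of a number field `K`. -/
def kfreeSet (K : Type*) [Field K] [NumberField K] (k : ℕ) : Set (𝓞 K) :=
  {x | ∀ P : Ideal (𝓞 K), P.IsPrime → P ≠ ⊥ → x ∉ P ^ k}

/-- The shift space `𝕏_{K,k}` of admissible sets: subsets of `𝓞 K` missing at least
one residue class modulo `𝔭^k` for every nonzero prime ideal `𝔭`. -/
def admissibleSets (K : Type*) [Field K] [NumberField K] (k : ℕ) : Set (Set (𝓞 K)) :=
  {X | ∀ P : Ideal (𝓞 K), P.IsPrime → P ≠ ⊥ → ∃ c : 𝓞 K, ∀ y ∈ X, y - c ∉ P ^ k}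

/-! Admissibility forbids residue classes in finite quotients, so it is a closed condition; it holds
for every translate of the set `V` of `k`-free integers, which gives one inclusion.

For the other, let `X` be admissible and `F` finite, and put `A = F ∩ X`, `B = F \ X`. Admissibility
provides residues `d P` modulo `P ^ k` avoided by `A`. Almost all primes separate `A` from `B`, so
`d` can be changed at distinct such primes `Q b`, one for each `b ∈ B`, to be `b` itself. Let `T`
be a finite set of primes containing all `Q b`. A translate `t + V` with `t ≡ d P` modulo `P ^ k`
for every `P ∈ T` omits `B`, and it contains `A` provided `a - t ∉ P ^ k` also for `P ∉ T` and
`a ∈ A`; as `k ≥ 2`, it suffices that `a - t ∉ P ^ 2`.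

By the Chinese remainder theorem, the suitable `t` for the primes in `T` contain a progression
`t₀ + m * z` with `m` prime to the remaining ones, and a sieve finds a suitable `z` in a coordinate
box of side `N` in dimension `n`. If `a - (t₀ + m * z) ∈ P ^ 2`, then `z` lies in a single residue
class modulo `P ^ 2`, which meets the box in at most `1 + C * N ^ n / absNorm (P ^ 2)` points.
Norms being `O(N ^ n)` on the box, only primes with `absNorm (P ^ 2) = O(N ^ n)` matter. As
`∑ 1 / absNorm (P ^ 2)` converges, there are `o(N ^ n)` of them and its tail over `P ∉ T` is small
for large `T`, so for large `N` the excluded classes do not fill the box.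
-/

open IsDedekindDomain Filter Topology

section Summation

variable {α β : Type*}

lemma finite_setOf_le_of_summable_inv {f : α → ℝ} (hf : ∀ i, 0 < f i)
    (hsum : Summable fun i => (f i)⁻¹) (x : ℝ) : {i | f i ≤ x}.Finite := by
  have hinv : Tendsto (fun i => (f i)⁻¹) cofinite (𝓝[>] 0) :=
    tendsto_nhdsWithin_iff.mpr
      ⟨hsum.tendsto_cofinite_zero, Eventually.of_forall fun i => inv_pos.mpr (hf i)⟩
  have hf_atTop : Tendsto f cofinite atTop :=
    hinv.inv_tendsto_nhdsGT_zero.congr fun i => inv_inv (f i)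
  simpa using eventually_cofinite.mp (hf_atTop.eventually_gt_atTop x)

lemma tendsto_ncard_setOf_le_div_atTop {f : α → ℝ} (hf : ∀ i, 0 < f i)
    (hsum : Summable fun i => (f i)⁻¹) :
    Tendsto (fun x => ({i | f i ≤ x}.ncard : ℝ) / x) atTop (𝓝 0) := by
  have ncard_div_eq_tsum (x : ℝ) :
      ({i | f i ≤ x}.ncard : ℝ) / x = ∑' i, {i | f i ≤ x}.indicator (fun _ => x⁻¹) i := by
    rw [← tsum_subtype, tsum_const, nsmul_eq_mul, Nat.card_coe_set_eq, div_eq_mul_inv]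
  simp_rw [ncard_div_eq_tsum]
  rw [← tsum_zero (β := α)]
  refine tendsto_tsum_of_dominated_convergence hsum (fun i => ?_) (Eventually.of_forall ?_)
  · refine tendsto_inv_atTop_zero.congr' ?_
    filter_upwards [eventually_ge_atTop (f i)] with x hx using by simp [hx]
  · intro x i
    by_cases hi : f i ≤ x
    · have hx := (hf i).trans_le hi
      simpa [hi, abs_of_pos hx] using inv_anti₀ (hf i) hi
    · simpa [hi] using (hf i).le

lemma summable_comp_of_card_fiber_le {f : α → β} {g : β → ℝ} {d : ℕ} (hg : ∀ j, 0 ≤ g j)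
    (hsum : Summable g) (hf : ∀ s : Finset α, ∀ j, (∀ i ∈ s, f i = j) → s.card ≤ d) :
    Summable (g ∘ f) := by
  classical
  refine summable_of_sum_le (c := d * ∑' j, g j) (fun i => hg (f i)) fun s => ?_
  calc ∑ i ∈ s, g (f i)
      = ∑ j ∈ s.image f, {i ∈ s | f i = j}.card • g j := Finset.sum_comp g f
    _ ≤ ∑ j ∈ s.image f, d * g j := by
        refine Finset.sum_le_sum fun j _ => ?_
        rw [nsmul_eq_mul]
        gcongr
        · exact hg j
        · exact hf _ j fun i hi => (Finset.mem_filter.mp hi).2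
    _ = d * ∑ j ∈ s.image f, g j := by rw [Finset.mul_sum]
    _ ≤ d * ∑' j, g j := by
        gcongr
        exact hsum.sum_le_tsum _ fun j _ => hg j

end Summation

lemma floor_add_one_pow_le {x : ℝ} (hx : 0 ≤ x) (n : ℕ) : (⌊x⌋₊ + 1 : ℝ) ^ n ≤ 1 + (2 * x) ^ n := by
  rcases lt_or_ge x 1 with hx1 | hx1
  · rw [Nat.floor_eq_zero.mpr hx1]
    simp only [Nat.cast_zero, zero_add, one_pow, le_add_iff_nonneg_right]
    positivity
  · calc (⌊x⌋₊ + 1 : ℝ) ^ n ≤ (2 * x) ^ n := by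
          gcongr
          linarith [Nat.floor_le hx]
      _ ≤ 1 + (2 * x) ^ n := by linarith

section Sieve

variable {ι S : Type*} [Fintype ι] [CommRing S] (b : Module.Basis ι ℤ S)

/-- The box of elements whose coordinates in the basis `b` all lie in `[0, N)`. -/
noncomputable def coordBox [DecidableEq ι] (N : ℕ) : Finset S :=
  (Fintype.piFinset fun _ : ι => Finset.Ico (0 : ℤ) N).map b.equivFun.symm.toEquiv.toEmbedding

variable [DecidableEq ι] {b}

lemma mem_coordBox {N : ℕ} {z : S} :
    z ∈ coordBox b N ↔ ∀ i, 0 ≤ b.repr z i ∧ b.repr z i < N := by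
  simp [coordBox, Finset.mem_map_equiv]

lemma card_coordBox (N : ℕ) : (coordBox b N).card = N ^ Fintype.card ι := by
  simp [coordBox, Fintype.card_piFinset]

lemma exists_forall_abs_repr_sub_le (A : Finset S) (t m : S) :
    ∃ D > (0 : ℤ), ∀ N ≠ 0, ∀ z ∈ coordBox b N, ∀ a ∈ A, ∀ i,
      |b.repr (a - (t + m * z)) i| ≤ D * N := by
  set M := Algebra.leftMulMatrix b m
  obtain ⟨D, hD⟩ := ((A ×ˢ Finset.univ).image fun p : S × ι =>
    |b.repr (p.1 - t) p.2| + ∑ j, |M p.2 j|).exists_le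
  refine ⟨max D 1, by positivity, fun N hN z hz a ha i => ?_⟩
  have hNpos : (1 : ℤ) ≤ N := by exact_mod_cast Nat.one_le_iff_ne_zero.mpr hN
  have repr_mul : b.repr (m * z) i = ∑ j, M i j * b.repr z j :=
    (congrFun (Algebra.leftMulMatrix_mulVec_repr b m z) i).symm
  have abs_coord_le (j : ι) : |b.repr z j| ≤ N := by
    obtain ⟨h_nonneg, h_lt⟩ := mem_coordBox.mp hz j
    exact (abs_of_nonneg h_nonneg).trans_le h_lt.le
  calc |b.repr (a - (t + m * z)) i|
      = |b.repr (a - t) i - ∑ j, M i j * b.repr z j| := by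
        rw [← repr_mul, ← sub_sub, map_sub, Finsupp.sub_apply]
    _ ≤ |b.repr (a - t) i| + ∑ j, |M i j * b.repr z j| :=
        (abs_sub _ _).trans (add_le_add_right (Finset.abs_sum_le_sum_abs _ _) _)
    _ ≤ |b.repr (a - t) i| * N + ∑ j, |M i j| * N := by
        gcongr with j
        · exact le_mul_of_one_le_right (abs_nonneg _) hNpos
        · rw [abs_mul]
          gcongr
          exact abs_coord_le j
    _ = (|b.repr (a - t) i| + ∑ j, |M i j|) * N := by rw [add_mul, Finset.sum_mul]
    _ ≤ max D 1 * N := by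
        gcongr
        exact le_max_of_le_left <| hD _ (Finset.mem_image.mpr ⟨(a, i), by simp [ha], rfl⟩)

lemma card_le_of_forall_abs_repr_sub_lt_imp_eq {N : ℕ} {Z : Finset S} (hZ : Z ⊆ coordBox b N)
    {s : ℝ} (hs : 0 < s)
    (hsep : ∀ z ∈ Z, ∀ w ∈ Z, (∀ i, |(b.repr (z - w) i : ℝ)| < s) → z = w) :
    Z.card ≤ (⌊N / s⌋₊ + 1) ^ Fintype.card ι := by
  have card_cells : (Fintype.piFinset fun _ : ι => Finset.Icc (0 : ℤ) ⌊N / s⌋₊).card =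
      (⌊N / s⌋₊ + 1) ^ Fintype.card ι := by
    rw [Fintype.card_piFinset, Finset.prod_const, Finset.card_univ, Int.card_Icc, sub_zero,
      Int.toNat_natCast_add_one]
  rw [← card_cells]
  refine Finset.card_le_card_of_injOn (fun z i => ⌊(b.repr z i : ℝ) / s⌋) (fun z hz => ?_)
    fun z hz w hw hzw => hsep z hz w hw fun i => ?_
  · simp only [Finset.mem_coe, Fintype.mem_piFinset, Finset.mem_Icc]
    intro i
    obtain ⟨h_nonneg, h_lt⟩ := mem_coordBox.mp (hZ hz) i
    have h_nonneg' : (0 : ℝ) ≤ b.repr z i := by exact_mod_cast h_nonneg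
    have h_le' : (b.repr z i : ℝ) ≤ N := by exact_mod_cast h_lt.le
    rw [Int.natCast_floor_eq_floor (by positivity)]
    exact ⟨Int.floor_nonneg.mpr (div_nonneg h_nonneg' hs.le), Int.floor_le_floor (by gcongr)⟩
  · have h := Int.abs_sub_lt_one_of_floor_eq_floor (congrFun hzw i)
    rw [← sub_div, abs_div, abs_of_pos hs, div_lt_one hs] at h
    simpa using h

lemma exists_forall_abs_norm_sub_le [IsDomain S] (A : Finset S) (t m : S) :
    ∃ T > (0 : ℝ), ∀ N ≠ 0, ∀ z ∈ coordBox b N, ∀ a ∈ A,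
      |(Algebra.norm ℤ (a - (t + m * z)) : ℝ)| ≤ T * N ^ Fintype.card ι := by
  obtain ⟨D, hD_pos, hD⟩ := exists_forall_abs_repr_sub_le (b := b) A t m
  have normBound_pos := ClassGroup.normBound_pos AbsoluteValue.abs b
  refine ⟨ClassGroup.normBound AbsoluteValue.abs b * D ^ Fintype.card ι, by positivity,
    fun N hN z hz a ha => ?_⟩
  have norm_le : |Algebra.norm ℤ (a - (t + m * z))| ≤ _ :=
    ClassGroup.norm_le AbsoluteValue.abs b (a - (t + m * z)) (hD N hN z hz a ha)
  rw [mul_assoc, ← mul_pow]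
  exact_mod_cast norm_le

variable (b) in
/-- A constant `C` such that a box of side `N` in dimension `n` contains at most
`1 + C * N ^ n / absNorm I` elements of any residue class modulo `I`; see
`card_le_of_forall_sub_mem`. -/
noncomputable def boxConst [IsDomain S] : ℝ :=
  2 ^ Fintype.card ι * ClassGroup.normBound AbsoluteValue.abs b

lemma boxConst_nonneg [IsDomain S] : 0 ≤ boxConst b := by
  have := ClassGroup.normBound_pos AbsoluteValue.abs b
  unfold boxConst
  positivity

variable [IsDedekindDomain S] [Module.Free ℤ S] [Module.Finite ℤ S]

lemma eq_zero_of_mem_of_abs_repr_lt {I : Ideal S} {x : S} (hx : x ∈ I) {y : ℝ}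
    (hrepr : ∀ i, |(b.repr x i : ℝ)| < y)
    (hy : ClassGroup.normBound AbsoluteValue.abs b * y ^ Fintype.card ι ≤ Ideal.absNorm I) :
    x = 0 := by
  have norm_lt := ClassGroup.norm_lt AbsoluteValue.abs b x (y := y) fun i => by
    simpa using hrepr i
  have norm_lt_absNorm : |Algebra.norm ℤ x| < Ideal.absNorm I := by
    exact_mod_cast norm_lt.trans_le hy
  exact Algebra.norm_eq_zero_iff.mp
    (Int.eq_zero_of_abs_lt_dvd (Ideal.absNorm_dvd_norm_of_mem hx) norm_lt_absNorm)

lemma card_le_of_forall_sub_mem {I : Ideal S} (hI : I ≠ ⊥) {N : ℕ} {Z : Finset S}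
    (hZ : Z ⊆ coordBox b N) (hsub : ∀ z ∈ Z, ∀ w ∈ Z, z - w ∈ I) :
    (Z.card : ℝ) ≤ 1 + boxConst b * N ^ Fintype.card ι * (Ideal.absNorm I : ℝ)⁻¹ := by
  -- The scale `s` below makes `C * s ^ n = absNorm I`: an element of `I` with all coordinates
  -- below `s` then has norm less than `absNorm I`, hence vanishes.
  have := b.index_nonempty
  set n := Fintype.card ι
  set C := (ClassGroup.normBound AbsoluteValue.abs b : ℝ)
  have hC : 0 < C := Int.cast_pos.mpr (ClassGroup.normBound_pos _ _)
  have hnorm : (0 : ℝ) < Ideal.absNorm I := by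
    exact_mod_cast Nat.pos_of_ne_zero (Ideal.absNorm_eq_zero_iff.not.mpr hI)
  set s : ℝ := (Ideal.absNorm I / C) ^ (n : ℝ)⁻¹
  have hs : 0 < s := by positivity
  have pow_s : s ^ n = Ideal.absNorm I / C :=
    Real.rpow_inv_natCast_pow (by positivity) Fintype.card_ne_zero
  have card_le : Z.card ≤ (⌊N / s⌋₊ + 1) ^ n :=
    card_le_of_forall_abs_repr_sub_lt_imp_eq hZ hs fun z hz w hw hlt => sub_eq_zero.mp
      (eq_zero_of_mem_of_abs_repr_lt (hsub z hz w hw) hlt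
        (by rw [pow_s, mul_div_cancel₀ _ hC.ne']))
  calc (Z.card : ℝ) ≤ (⌊N / s⌋₊ + 1 : ℝ) ^ n := by exact_mod_cast card_le
    _ ≤ 1 + (2 * (N / s)) ^ n := floor_add_one_pow_le (by positivity) n
    _ = 1 + boxConst b * N ^ n * (Ideal.absNorm I : ℝ)⁻¹ := by
      rw [mul_pow, div_pow, pow_s, show boxConst b = 2 ^ n * C from rfl]
      field_simp

variable {κ : Type*} {I : κ → Ideal S} {A : Finset S} {t m : S}

lemma one_le_of_forall_exists_sub_mem {N : ℕ} (hN : N ≠ 0) {F : Finset κ} (hI : ∀ i, I i ≠ ⊥)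
    (hm : ∀ i z, m * z ∈ I i → z ∈ I i)
    (hcover : ∀ z ∈ coordBox b N, ∃ i ∈ F, ∃ a ∈ A, a - (t + m * z) ∈ I i) :
    1 ≤ A.card * (F.card / (N : ℝ) ^ Fintype.card ι +
      boxConst b * ∑ i ∈ F, (Ideal.absNorm (I i) : ℝ)⁻¹) := by
  classical
  set n := Fintype.card ι
  set Z : κ × S → Finset S := fun p => {z ∈ coordBox b N | p.2 - (t + m * z) ∈ I p.1}
  have hZ (p : κ × S) : ((Z p).card : ℝ) ≤
      1 + boxConst b * N ^ n * (Ideal.absNorm (I p.1) : ℝ)⁻¹ := by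
    refine card_le_of_forall_sub_mem (hI p.1) (Finset.filter_subset _ _) fun z hz w hw => ?_
    have hdiff := sub_mem (Finset.mem_filter.mp hw).2 (Finset.mem_filter.mp hz).2
    exact hm p.1 _ (by convert hdiff using 1; ring)
  have hsubset : coordBox b N ⊆ (F ×ˢ A).biUnion Z := fun z hz => by
    obtain ⟨i, hi, a, ha, hmem⟩ := hcover z hz
    exact Finset.mem_biUnion.mpr
      ⟨(i, a), Finset.mk_mem_product hi ha, Finset.mem_filter.mpr ⟨hz, hmem⟩⟩
  refine le_of_mul_le_mul_right ?_ (by positivity : (0 : ℝ) < N ^ n)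
  calc 1 * (N : ℝ) ^ n = (coordBox b N).card := by simp [card_coordBox, n]
    _ ≤ ∑ p ∈ F ×ˢ A, ((Z p).card : ℝ) := by
      exact_mod_cast (Finset.card_le_card hsubset).trans Finset.card_biUnion_le
    _ ≤ ∑ p ∈ F ×ˢ A, (1 + boxConst b * N ^ n * (Ideal.absNorm (I p.1) : ℝ)⁻¹) :=
      Finset.sum_le_sum fun p _ => hZ p
    _ = A.card * (F.card + boxConst b * N ^ n * ∑ i ∈ F, (Ideal.absNorm (I i) : ℝ)⁻¹) := by
      simp_rw [Finset.sum_product, Finset.sum_const, nsmul_eq_mul, ← Finset.mul_sum,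
        Finset.sum_add_distrib, ← Finset.mul_sum, Finset.sum_const, nsmul_one]
    _ = A.card * (F.card / (N : ℝ) ^ n + boxConst b * ∑ i ∈ F, (Ideal.absNorm (I i) : ℝ)⁻¹) *
          N ^ n := by
      field_simp

lemma absNorm_le_abs_norm_of_mem {J : Ideal S} {x : S} (hx : x ∈ J) (hx0 : x ≠ 0) :
    (Ideal.absNorm J : ℝ) ≤ |(Algebra.norm ℤ x : ℝ)| := by
  have norm_ne_zero : Algebra.norm ℤ x ≠ 0 := Algebra.norm_eq_zero_iff.not.mpr hx0
  have le_abs := Int.le_of_dvd (abs_pos.mpr norm_ne_zero)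
    ((dvd_abs _ _).mpr (Ideal.absNorm_dvd_norm_of_mem hx))
  exact_mod_cast le_abs

lemma exists_forall_sub_notMem_of_card_mul_lt_one (hI : ∀ i, I i ≠ ⊥)
    (hsum : Summable fun i => (Ideal.absNorm (I i) : ℝ)⁻¹) (hm : ∀ i z, m * z ∈ I i → z ∈ I i)
    (hA : ∀ a ∈ A, ∀ z, a ≠ t + m * z)
    (hlt : A.card * (boxConst b * ∑' i, (Ideal.absNorm (I i) : ℝ)⁻¹) < 1) :
    ∃ z, ∀ i, ∀ a ∈ A, a - (t + m * z) ∉ I i := by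
  by_contra! hbad
  have := b.index_nonempty
  set n := Fintype.card ι
  have absNorm_pos (i : κ) : (0 : ℝ) < Ideal.absNorm (I i) := by
    exact_mod_cast Nat.pos_of_ne_zero (Ideal.absNorm_eq_zero_iff.not.mpr (hI i))
  obtain ⟨T, hT, norm_le⟩ := exists_forall_abs_norm_sub_le (b := b) A t m
  set small : ℝ → Set κ := fun x => {i | (Ideal.absNorm (I i) : ℝ) ≤ x}
  have covering_bound (N : ℕ) (hN : N ≠ 0) : 1 ≤ A.card * (T * ((small (T * N ^ n)).ncard /
      (T * N ^ n)) + boxConst b * ∑' i, (Ideal.absNorm (I i) : ℝ)⁻¹) := by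
    have hfin := finite_setOf_le_of_summable_inv absNorm_pos hsum (T * N ^ n)
    have hcover := one_le_of_forall_exists_sub_mem (b := b) hN (F := hfin.toFinset) hI hm
      fun z hz => by
        obtain ⟨i, a, ha, hmem⟩ := hbad z
        have hle := (absNorm_le_abs_norm_of_mem hmem (sub_ne_zero.mpr (hA a ha z))).trans
          (norm_le N hN z hz a ha)
        exact ⟨i, hfin.mem_toFinset.mpr hle, a, ha, hmem⟩
    rw [← Set.ncard_eq_toFinset_card _ hfin] at hcover
    have mul_div_cancel : T * ((small (T * N ^ n)).ncard / (T * N ^ n)) =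
        (small (T * N ^ n)).ncard / (N : ℝ) ^ n := by field_simp
    rw [mul_div_cancel]
    refine hcover.trans ?_
    gcongr
    · exact boxConst_nonneg
    · exact hsum.sum_le_tsum _ fun i _ => by positivity
  have hlim : Tendsto (fun N : ℕ => A.card * (T * ((small (T * N ^ n)).ncard / (T * N ^ n)) +
      boxConst b * ∑' i, (Ideal.absNorm (I i) : ℝ)⁻¹)) atTop
      (𝓝 (A.card * (T * 0 + boxConst b * ∑' i, (Ideal.absNorm (I i) : ℝ)⁻¹))) :=
    ((((tendsto_ncard_setOf_le_div_atTop absNorm_pos hsum).comp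
      (((tendsto_pow_atTop Fintype.card_ne_zero).comp
        tendsto_natCast_atTop_atTop).const_mul_atTop hT)).const_mul T).add_const _).const_mul _
  have one_le := ge_of_tendsto hlim ((eventually_ne_atTop 0).mono covering_bound)
  rw [mul_zero, zero_add] at one_le
  exact one_le.not_gt hlt

end Sieve

section Primes

variable {S : Type*} [CommRing S] [IsDedekindDomain S]

lemma eventually_notMem_asIdeal {x : S} (hx : x ≠ 0) :
    ∀ᶠ P : HeightOneSpectrum S in cofinite, x ∉ P.asIdeal := by
  have hfin := Ideal.finite_factors (I := Ideal.span {x}) (by simpa using hx)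
  simpa [eventually_cofinite, Ideal.dvd_span_singleton] using hfin

lemma exists_superset_forall_mem_pow (S₀ : Finset (HeightOneSpectrum S)) (k : ℕ) :
    ∃ (m : S) (T : Finset (HeightOneSpectrum S)), S₀ ⊆ T ∧
      (∀ P ∈ T, m ∈ P.asIdeal ^ k) ∧ ∀ P ∉ T, m ∉ P.asIdeal := by
  have prod_ne_bot : ∏ P ∈ S₀, P.asIdeal ≠ ⊥ :=
    Finset.prod_ne_zero_iff.mpr fun P _ => P.ne_bot
  obtain ⟨n, hn, hn0⟩ := Submodule.exists_mem_ne_zero_of_ne_bot prod_ne_bot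
  have hfin : {P : HeightOneSpectrum S | n ∈ P.asIdeal}.Finite := by
    simpa [eventually_cofinite] using eventually_notMem_asIdeal hn0
  refine ⟨n ^ k, hfin.toFinset, fun P hP => ?_, fun P hP => ?_, fun P hP hmem => ?_⟩
  · exact hfin.mem_toFinset.mpr (Ideal.prod_le_inf.trans (Finset.inf_le hP) hn)
  · exact Ideal.pow_mem_pow (hfin.mem_toFinset.mp hP) k
  · exact hP (hfin.mem_toFinset.mpr (P.isPrime.mem_of_pow_mem k hmem))

variable [Module.Finite ℤ S]

lemma prime_absNorm_under (P : HeightOneSpectrum S) :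
    (Ideal.absNorm (P.asIdeal.under ℤ)).Prime := by
  have := NeZero.mk P.ne_bot
  exact Nat.absNorm_under_prime P.asIdeal

variable [Module.Free ℤ S]

variable (S) in
lemma infinite_heightOneSpectrum : Infinite (HeightOneSpectrum S) := by
  refine Infinite.of_surjective (β := Nat.Primes) (fun P => ⟨_, prime_absNorm_under P⟩) fun p => ?_
  have hp : (Ideal.span {(p : ℤ)}).IsPrime :=
    (Ideal.span_singleton_prime (by exact_mod_cast p.2.ne_zero)).mpr
      (Nat.prime_iff_prime_int.mp p.2)
  obtain ⟨P, hP, hP_over⟩ := Ideal.nonempty_primesOver (S := S) (Ideal.span {(p : ℤ)})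
  have hP_bot : P ≠ ⊥ := Ideal.ne_bot_of_liesOver_of_ne_bot
    (p := Ideal.span {(p : ℤ)}) (by simpa using p.2.ne_zero) P
  refine ⟨⟨P, hP, hP_bot⟩, Subtype.ext ?_⟩
  simp [← hP_over.over]

lemma absNorm_under_le_absNorm (P : HeightOneSpectrum S) :
    Ideal.absNorm (P.asIdeal.under ℤ) ≤ Ideal.absNorm P.asIdeal :=
  Nat.le_of_dvd (Nat.pos_of_ne_zero (Ideal.absNorm_eq_zero_iff.not.mpr P.ne_bot))
    (Int.absNorm_under_dvd_absNorm P.asIdeal)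

lemma card_le_finrank_of_forall_absNorm_under_eq {p : ℕ} {s : Finset (HeightOneSpectrum S)}
    (hs : ∀ P ∈ s, Ideal.absNorm (P.asIdeal.under ℤ) = p) : s.card ≤ Module.finrank ℤ S := by
  classical
  obtain rfl | ⟨P₀, hP₀⟩ := s.eq_empty_or_nonempty
  · simp
  have hp : p.Prime := hs P₀ hP₀ ▸ prime_absNorm_under P₀
  have prod_dvd : ∏ P ∈ s, P.asIdeal ∣ Ideal.span {(p : S)} := by
    rw [← Finset.prod_image (f := fun I => I) fun P _ Q _ h => HeightOneSpectrum.ext h]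
    refine Finset.prod_primes_dvd _ (Finset.forall_mem_image.mpr fun P _ => P.prime)
      (Finset.forall_mem_image.mpr fun P hP => ?_)
    rw [Ideal.dvd_span_singleton, ← hs P hP]
    exact Int.absNorm_under_mem P.asIdeal
  refine (Nat.pow_le_pow_iff_right hp.one_lt).mp ?_
  calc p ^ s.card ≤ ∏ P ∈ s, Ideal.absNorm P.asIdeal :=
      Finset.pow_card_le_prod _ _ _ fun P hP => hs P hP ▸ absNorm_under_le_absNorm P
    _ ≤ p ^ Module.finrank ℤ S := by
      refine Nat.le_of_dvd (pow_pos hp.pos _) ?_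
      rw [← map_prod, ← Ideal.absNorm_span_natCast]
      exact map_dvd Ideal.absNorm prod_dvd

variable (S) in
lemma summable_inv_absNorm_sq :
    Summable fun P : HeightOneSpectrum S => (Ideal.absNorm (P.asIdeal ^ 2) : ℝ)⁻¹ := by
  have summable_under : Summable fun P : HeightOneSpectrum S =>
      ((Ideal.absNorm (P.asIdeal.under ℤ) : ℝ) ^ 2)⁻¹ :=
    summable_comp_of_card_fiber_le (g := fun p : ℕ => ((p : ℝ) ^ 2)⁻¹) (fun p => by positivity)
      (Real.summable_nat_pow_inv.mpr one_lt_two)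
      fun s p hs => card_le_finrank_of_forall_absNorm_under_eq hs
  refine summable_under.of_nonneg_of_le (fun P => by positivity) fun P => ?_
  have under_pos := (prime_absNorm_under P).pos
  rw [map_pow, Nat.cast_pow]
  gcongr
  exact absNorm_under_le_absNorm P

end Primes

section Approximation

variable {S : Type*} [CommRing S] [IsDedekindDomain S] {k : ℕ} {A B : Finset S}

lemma exists_forall_add_mul_sub_mem_pow {m : S} {T : Finset (HeightOneSpectrum S)}
    (hm : ∀ P ∈ T, m ∈ P.asIdeal ^ k) (d : HeightOneSpectrum S → S) :
    ∃ t, ∀ P ∈ T, ∀ z, t + m * z - d P ∈ P.asIdeal ^ k := by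
  obtain ⟨t, ht⟩ := IsDedekindDomain.exists_forall_sub_mem_ideal
    (s := T) HeightOneSpectrum.asIdeal (fun _ => k) (fun P _ => P.prime)
    (fun P _ Q _ hne h => hne (HeightOneSpectrum.ext h)) (fun P => d P)
  refine ⟨t, fun P hP z => ?_⟩
  rw [add_sub_right_comm]
  exact add_mem (ht P hP) (Ideal.mul_mem_right z _ (hm P hP))

variable [Module.Free ℤ S] [Module.Finite ℤ S]

lemma exists_forall_sub_mem_pow_and_sub_notMem_pow (hk : 2 ≤ k) {d : HeightOneSpectrum S → S}
    (hd : ∀ P, ∀ a ∈ A, a - d P ∉ P.asIdeal ^ k) (S₀ : Finset (HeightOneSpectrum S)) :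
    ∃ t, (∀ P ∈ S₀, t - d P ∈ P.asIdeal ^ k) ∧
      ∀ P : HeightOneSpectrum S, ∀ a ∈ A, a - t ∉ P.asIdeal ^ k := by
  classical
  set b := Module.Free.chooseBasis ℤ S
  have := infinite_heightOneSpectrum S
  obtain ⟨P₀⟩ : Nonempty (HeightOneSpectrum S) := inferInstance
  have tail_lim := ((tendsto_tsum_compl_atTop_zero fun P : HeightOneSpectrum S =>
    (Ideal.absNorm (P.asIdeal ^ 2) : ℝ)⁻¹).const_mul (boxConst b)).const_mul (A.card : ℝ)
  obtain ⟨S₁, tail_lt⟩ :=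
    (tail_lim.eventually_lt_const (by simp : _ < (1 : ℝ))).exists_forall_of_atTop
  -- Including one prime `P₀` in `T` ensures `a ≠ t + m * z` for all `a ∈ A` and all `z`.
  obtain ⟨m, T, hT, hm_mem, hm_notMem⟩ := exists_superset_forall_mem_pow (insert P₀ (S₀ ∪ S₁)) k
  obtain ⟨hP₀, hS₀, hS₁⟩ : P₀ ∈ T ∧ S₀ ⊆ T ∧ S₁ ⊆ T := by
    rwa [Finset.insert_subset_iff, Finset.union_subset_iff] at hT
  obtain ⟨t, ht⟩ := exists_forall_add_mul_sub_mem_pow hm_mem d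
  have sub_notMem (P) (hP : P ∈ T) (a) (ha : a ∈ A) (z) : a - (t + m * z) ∉ P.asIdeal ^ k :=
    fun hmem => hd P a ha (by simpa using add_mem hmem (ht P hP z))
  obtain ⟨z, hz⟩ := exists_forall_sub_notMem_of_card_mul_lt_one (b := b) (A := A) (t := t) (m := m)
    (I := fun P : {P // P ∉ T} => P.1.asIdeal ^ 2) (fun P => pow_ne_zero 2 P.1.ne_bot)
    ((summable_inv_absNorm_sq S).subtype _)
    (fun P z hz => (Ideal.IsPrime.mul_mem_pow (hI := P.1.isPrime) _ hz).resolve_left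
      (hm_notMem P.1 P.2))
    (fun a ha z h => sub_notMem P₀ hP₀ a ha z (by simp [h])) (tail_lt T hS₁)
  refine ⟨t + m * z, fun P hP => ht P (hS₀ hP) z, fun P a ha => ?_⟩
  by_cases hP : P ∈ T
  · exact sub_notMem P hP a ha z
  · exact fun hmem => hz ⟨P, hP⟩ a ha (Ideal.pow_le_pow_right hk hmem)

lemma exists_residues_of_disjoint (hk : k ≠ 0) (hAB : Disjoint A B)
    {c : HeightOneSpectrum S → S} (hc : ∀ P, ∀ a ∈ A, a - c P ∉ P.asIdeal ^ k) :
    ∃ d : HeightOneSpectrum S → S,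
      (∀ P, ∀ a ∈ A, a - d P ∉ P.asIdeal ^ k) ∧ ∀ b ∈ B, ∃ P, d P = b := by
  have := infinite_heightOneSpectrum S
  set T := {P : HeightOneSpectrum S | ∀ a ∈ A, ∀ b ∈ B, a - b ∉ P.asIdeal}
  have : Infinite T := by
    refine (frequently_cofinite_iff_infinite.mp (Eventually.frequently ?_)).to_subtype
    simp only [eventually_all_finset]
    exact fun a ha b hb =>
      eventually_notMem_asIdeal (sub_ne_zero.mpr (Finset.disjoint_iff_ne.mp hAB a ha b hb))
  set Q : B ↪ T := (B.equivFin.toEmbedding.trans Fin.valEmbedding).trans (Infinite.natEmbedding T)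
  have hQ : Function.Injective fun b => (Q b : HeightOneSpectrum S) :=
    Subtype.val_injective.comp Q.injective
  refine ⟨Function.extend (fun b => (Q b : HeightOneSpectrum S)) (↑) c, fun P a ha => ?_,
    fun b hb => ⟨Q ⟨b, hb⟩, hQ.extend_apply _ _ _⟩⟩
  by_cases hP : ∃ b, (Q b : HeightOneSpectrum S) = P
  · obtain ⟨b, rfl⟩ := hP
    rw [hQ.extend_apply]
    exact fun hmem => (Q b).2 a ha b b.2 (Ideal.pow_le_self hk hmem)
  · rw [Function.extend_apply' _ _ _ hP]
    exact hc P a ha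

end Approximation

section Admissible

variable {K : Type*} [Field K] [NumberField K] {k : ℕ}

lemma exists_translate_agrees_on_finset (hk : 2 ≤ k) {X : Set (𝓞 K)} (hX : X ∈ admissibleSets K k)
    (F : Finset (𝓞 K)) : ∃ t, ∀ x ∈ F, (x ∈ X ↔ x - t ∈ kfreeSet K k) := by
  classical
  choose c hc using fun P : HeightOneSpectrum (𝓞 K) => hX P.asIdeal P.isPrime P.ne_bot
  obtain ⟨d, hdA, hdB⟩ := exists_residues_of_disjoint (k := k) (by lia)
    (Finset.disjoint_filter_filter_not F F (· ∈ X))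
    fun P a ha => hc P a (Finset.mem_filter.mp ha).2
  have := infinite_heightOneSpectrum (𝓞 K)
  choose! Q hQ using hdB
  obtain ⟨t, htB, htA⟩ := exists_forall_sub_mem_pow_and_sub_notMem_pow hk hdA
    ({x ∈ F | x ∉ X}.image Q)
  refine ⟨t, fun x hx => ⟨fun hxX P hP hP_bot => ?_, fun hfree => ?_⟩⟩
  · exact htA ⟨P, hP, hP_bot⟩ x (Finset.mem_filter.mpr ⟨hx, hxX⟩)
  · by_contra hxX
    have hxB : x ∈ {x ∈ F | x ∉ X} := Finset.mem_filter.mpr ⟨hx, hxX⟩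
    have hmem := htB (Q x) (Finset.mem_image_of_mem Q hxB)
    rw [hQ x hxB] at hmem
    exact hfree (Q x).asIdeal (Q x).isPrime (Q x).ne_bot (by simpa using neg_mem hmem)

lemma mem_image_add_left_kfreeSet {t x : 𝓞 K} :
    x ∈ (t + ·) '' kfreeSet K k ↔ x - t ∈ kfreeSet K k := by
  simp [Set.image_add_left, neg_add_eq_sub]

lemma image_add_left_kfreeSet_mem_admissibleSets (t : 𝓞 K) :
    (t + ·) '' kfreeSet K k ∈ admissibleSets K k := fun P hP hP_bot =>
  ⟨t, fun _ hy => mem_image_add_left_kfreeSet.mp hy P hP hP_bot⟩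

end Admissible

section PowerSetTopology

variable {G : Type*}

lemma isClosed_setOf_notMem (x : G) : IsClosed {X : Set G | x ∉ X} := by
  have hcont : Continuous fun (X : Set G) (g : G) =>
    @decide (g ∈ X) (Classical.propDecidable _) := continuous_induced_dom
  convert (isClosed_singleton (x := false)).preimage ((continuous_apply x).comp hcont) using 1
  ext X
  simp

lemma mem_closure_of_forall_finset {𝒮 : Set (Set G)} {X : Set G}
    (h : ∀ F : Finset G, ∃ Y ∈ 𝒮, ∀ x ∈ F, (x ∈ X ↔ x ∈ Y)) : X ∈ closure 𝒮 := by
  rw [closure_induced, mem_closure_iff]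
  intro U hU hXU
  obtain ⟨F, u, hu, hsub⟩ := isOpen_pi_iff.mp hU _ hXU
  obtain ⟨Y, hY, hXY⟩ := h F
  refine ⟨_, hsub fun x hx => ?_, Y, hY, rfl⟩
  have decide_eq : @decide (x ∈ X) (Classical.propDecidable _) =
      @decide (x ∈ Y) (Classical.propDecidable _) := decide_eq_decide.mpr (hXY x hx)
  simpa only [decide_eq] using (hu x hx).2

end PowerSetTopology

lemma isClosed_admissibleSets {K : Type*} [Field K] [NumberField K] (k : ℕ) :
    IsClosed (admissibleSets K k) := by
  have eq_iInter : admissibleSets K k =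
      ⋂ (P : Ideal (𝓞 K)) (_ : P.IsPrime) (_ : P ≠ ⊥), ⋃ q : 𝓞 K ⧸ P ^ k,
        ⋂ y ∈ Ideal.Quotient.mk (P ^ k) ⁻¹' {q}, {X | y ∉ X} := by
    ext X
    simp only [admissibleSets, Set.mem_iInter, Set.mem_iUnion, Set.mem_ofPred_eq, Set.mem_preimage,
      Set.mem_singleton_iff, Ideal.Quotient.mk_surjective.exists, Ideal.Quotient.eq]
    simp only [imp_not_comm]
  rw [eq_iInter]
  refine isClosed_iInter fun P => isClosed_iInter fun _ => isClosed_iInter fun hP_bot => ?_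
  have := Ring.HasFiniteQuotients.finiteQuotient (pow_ne_zero k hP_bot)
  exact isClosed_iUnion_of_finite fun q => isClosed_biInter fun y _ => isClosed_setOf_notMem y

/-- For `k ≥ 2`, the space `𝕏_{K,k}` of admissible sets is the closure of the orbit of
the set `V_{K,k}` of `k`-free integers under the translation action of `𝓞 K`. -/
theorem admissible_eq_orbit_closure {K : Type*} [Field K] [NumberField K]
    (k : ℕ) (hk : 2 ≤ k) :
    admissibleSets K k =
      closure {S : Set (𝓞 K) | ∃ t : 𝓞 K, S = (t + ·) '' kfreeSet K k} := by
  refine Set.Subset.antisymm (fun X hX => mem_closure_of_forall_finset fun F => ?_)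
    (closure_minimal ?_ (isClosed_admissibleSets k))
  · obtain ⟨t, ht⟩ := exists_translate_agrees_on_finset hk hX F
    exact ⟨_, ⟨t, rfl⟩, fun x hx => (ht x hx).trans mem_image_add_left_kfreeSet.symm⟩
  · rintro _ ⟨t, rfl⟩
    exact image_add_left_kfreeSet_mem_admissibleSets t
end

section
/- Let K be a totally real number field and let L be a finite-dimensional reduced commutative ℚ-algebra (an étale ℚ-algebra), with 𝓞_L = integral closure of ℤ in L. Let A : 𝓞_K → 𝓞_L be a ℤ-linear map with A(𝓞_K^×) ⊆ 𝓞_L^×. Then there exist a ℚ-algebra homomorphism τ : K → L and a unit ε ∈ 𝓞_L^× such that A(x) = ε·τ(x) for all x ∈ 𝓞_K. -/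
open NumberField

/-!
Suppose first that `g : 𝓞 K → 𝓞 F` preserves units, with `F` a number field. Every `ℤ`-linear form
`𝓞 K → ℂ` is a combination of the embeddings `σ : K → ℂ`, so the squared norm of `g u` is a
polynomial in the conjugates of `u`, a product of linear forms, and it equals `1` on units. By
Dirichlet's unit theorem, when `K` is totally real every multiplicative relation between conjugates
that holds for all units follows from `N u = ± 1`; linear independence of characters then shows
that a polynomial vanishing at the conjugates of all units vanishes on the torus `∏ σ, y σ = 1`.
So none of the linear forms has a zero on this torus. A form with two nonzero coefficients would
have one; therefore each conjugate of `g` is a multiple of a single embedding, and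
`g 1 * g (x * y) = g x * g y`. This identity passes to a reduced `ℚ`-algebra through its residue
fields, because `g` takes values in a number field after composition with a map to a field.
-/

theorem eval_eq_zero_of_forall_eval_monoidHom_eq_zero {ι G R : Type*} [Fintype ι] [MulOneClass G]
    [CommRing R] [IsDomain R] (ξ : ι → G →* R) {P : MvPolynomial ι R}
    (hP : ∀ g, MvPolynomial.eval (fun i => ξ i g) P = 0) {y : ι → R}
    (hy : ∀ m m' : ι →₀ ℕ, (∀ g, ∏ i, ξ i g ^ m i = ∏ i, ξ i g ^ m' i) →
      ∏ i, y i ^ m i = ∏ i, y i ^ m' i) :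
    MvPolynomial.eval y P = 0 := by
  let χ (m : ι →₀ ℕ) : G →* R := ∏ i, ξ i ^ m i
  have χ_apply (m : ι →₀ ℕ) (g : G) : χ m g = ∏ i, ξ i g ^ m i := by
    simp only [χ, MonoidHom.finsetProd_apply, MonoidHom.pow_apply]
  let p : (ι →₀ ℕ) →₀ R := Finsupp.onFinset P.support P.coeff (by simp)
  have eval_eq (z : ι → R) : MvPolynomial.eval z P =
      Finsupp.linearCombination R (fun m => ∏ i, z i ^ m i) p := by
    rw [MvPolynomial.eval_eq', Finsupp.linearCombination_onFinset]
    simp only [smul_eq_mul]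
  -- `p.mapDomain χ` collects the coefficients of all monomials inducing the same character of `G`.
  have mapDomain_eq_zero : p.mapDomain χ = 0 := by
    refine linearIndependent_iff.mp (linearIndependent_monoidHom G R) _ ?_
    ext g
    rw [Finsupp.linearCombination_mapDomain, Pi.zero_apply, ← hP g, eval_eq]
    simp [Finsupp.linearCombination_apply, Finsupp.sum, χ_apply]
  have factors : (fun m : ι →₀ ℕ => ∏ i, y i ^ m i).FactorsThrough χ := fun m m' hmm' =>
    hy m m' fun g => by rw [← χ_apply, hmm', χ_apply]
  rw [eval_eq, ← factors.extend_comp (fun _ => (0 : R)),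
    ← Finsupp.linearCombination_mapDomain, mapDomain_eq_zero, map_zero]

theorem exists_prod_eq_one_and_sum_mul_eq_zero {ι k : Type*} [Fintype ι] [Field k]
    [IsAlgClosed k] {c : ι → k} {i j : ι} (hij : i ≠ j) (hi : c i ≠ 0) (hj : c j ≠ 0) :
    ∃ y : ι → k, ∏ l, y l = 1 ∧ ∑ l, c l * y l = 0 := by
  classical
  -- The hyperplane `∑ l, c l * z l = 0` lies in no coordinate hyperplane, so it has a point `z`
  -- with nonzero coordinates, which can be rescaled to have product `1`.
  have exists_ne_zero (l : ι) : ∃ v ∈ LinearMap.ker (Fintype.linearCombination k c),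
      LinearMap.proj (R := k) (φ := fun _ => k) l v ≠ 0 := by
    obtain ⟨m, hml, hm⟩ : ∃ m, m ≠ l ∧ c m ≠ 0 := by
      by_cases h : i = l
      · exact ⟨j, h ▸ hij.symm, hj⟩
      · exact ⟨i, h, hi⟩
    refine ⟨Pi.single l (c m) - Pi.single m (c l), ?_, ?_⟩
    · simp [LinearMap.mem_ker, Fintype.linearCombination_apply_single, mul_comm]
    · simp [Pi.single_eq_of_ne hml.symm, hm]
  obtain ⟨z, hz, hz_ne⟩ := Module.Dual.exists_forall_mem_ne_zero_of_forall_exists _ _ exists_ne_zero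
  have prod_ne : ∏ l, z l ≠ 0 := Finset.prod_ne_zero_iff.mpr fun l _ => hz_ne l
  obtain ⟨t, ht⟩ := IsAlgClosed.exists_pow_nat_eq (∏ l, z l)⁻¹ (Fintype.card_pos_iff.mpr ⟨i⟩)
  refine ⟨t • z, ?_, ?_⟩
  · simp [Finset.prod_mul_distrib, ht, inv_mul_cancel₀ prod_ne]
  · have sum_eq_zero : ∑ l, z l * c l = 0 := by
      simpa [Fintype.linearCombination_apply] using hz
    simp only [Pi.smul_apply, smul_eq_mul, mul_left_comm _ t, mul_comm (c _), ← Finset.mul_sum,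
      sum_eq_zero, mul_zero]

theorem exists_forall_sum_mul_eq_mul {ι k : Type*} [Fintype ι] [Nonempty ι] [Field k]
    [IsAlgClosed k] {c : ι → k} (hc : ∀ y : ι → k, ∏ l, y l = 1 → ∑ l, c l * y l ≠ 0) :
    ∃ i, ∀ y : ι → k, ∑ l, c l * y l = c i * y i := by
  obtain ⟨i, hi⟩ : ∃ i, c i ≠ 0 := by
    by_contra! h
    exact hc 1 (by simp) (by simp [h])
  refine ⟨i, fun y => Fintype.sum_eq_single i fun j hji => ?_⟩
  have : c j = 0 := by
    by_contra hj
    obtain ⟨z, hz, hz0⟩ := exists_prod_eq_one_and_sum_mul_eq_zero hji hj hi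
    exact hc z hz hz0
  rw [this, zero_mul]

theorem exists_intermediateField_forall_mem {R k E M : Type*} [CommSemiring R] [Field k] [Field E]
    [Algebra R k] [Algebra R E] [Algebra k E] [IsScalarTower R k E] [AddCommMonoid M] [Module R M]
    [Module.Finite R M] (g : M →ₗ[R] E) (hg : ∀ x, IsIntegral k (g x)) :
    ∃ F : IntermediateField k E, FiniteDimensional k F ∧ ∀ x, g x ∈ F := by
  obtain ⟨s, hs⟩ := Module.Finite.fg_top (R := R) (M := M)
  let F := IntermediateField.adjoin k (g '' s)
  refine ⟨F, ?_, fun x => ?_⟩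
  · have := (s.finite_toSet.image g).to_subtype
    refine IntermediateField.finiteDimensional_adjoin ?_
    rintro _ ⟨x, -, rfl⟩
    exact hg x
  · have span_le : Submodule.span R (s : Set M) ≤
        ((Subalgebra.toSubmodule F.toSubalgebra).restrictScalars R).comap g :=
      Submodule.span_le.mpr fun y hy => IntermediateField.subset_adjoin k _ ⟨y, hy, rfl⟩
    exact span_le (hs ▸ Submodule.mem_top)

theorem exists_algHom_forall_eq_map_one_mul {k R S : Type*} [CommSemiring k] [Semiring R]
    [CommRing S] [Algebra k R] [Algebra k S] (B : R →ₗ[k] S) (h_one : IsUnit (B 1))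
    (h_mul : ∀ x y, B 1 * B (x * y) = B x * B y) :
    ∃ f : R →ₐ[k] S, ∀ x, B x = B 1 * f x := by
  obtain ⟨ε, hε⟩ := h_one
  refine ⟨AlgHom.ofLinearMap (LinearMap.mulLeft k (↑ε⁻¹ : S) ∘ₗ B) ?_ fun x y => ?_, fun x => ?_⟩
  · simp [← hε]
  · have : B (x * y) = ↑ε⁻¹ * (B x * B y) := by rw [← h_mul, ← hε, Units.inv_mul_cancel_left]
    simp only [LinearMap.comp_apply, LinearMap.mulLeft_apply, this]
    ring
  · simp [← hε]

section IntegralClosure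

variable {R A B : Type*} [CommRing R] [CommRing A] [CommRing B] [Algebra R A] [Algebra R B]
  {f : A →ₐ[R] B}

theorem mapIntegralClosure_injective (hf : Function.Injective f) :
    Function.Injective f.mapIntegralClosure :=
  fun _ _ h => Subtype.ext (hf (congrArg Subtype.val h))

theorem isLocalHom_mapIntegralClosure (hf : Function.Injective f) :
    IsLocalHom f.mapIntegralClosure.toRingHom := by
  have integral_algebraMap : (f.mapIntegralClosure.toRingHom.comp
      (algebraMap R (integralClosure R A))).IsIntegral := by
    rw [AlgHom.toRingHom_eq_coe, AlgHom.comp_algebraMap]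
    exact algebraMap_isIntegral_iff.mpr inferInstance
  exact integral_algebraMap.tower_top.isLocalHom (mapIntegralClosure_injective hf)

end IntegralClosure

theorem isTotallyReal_of_forall_im_eq_zero {K : Type*} [Field K]
    (hreal : ∀ φ : K →+* ℂ, ∀ x : K, (φ x).im = 0) : IsTotallyReal K where
  isReal w := InfinitePlace.isReal_iff.mpr <| ComplexEmbedding.isReal_iff.mpr <|
    RingHom.ext fun x => Complex.conj_eq_iff_im.mpr (hreal w.embedding x)

theorem exists_ratAlgHom_extending {K L : Type*} [Field K] [NumberField K] [CommRing L]
    [Algebra ℚ L] (g : 𝓞 K →+* L) : ∃ τ : K →ₐ[ℚ] L, ∀ x : 𝓞 K, τ x = g x := by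
  have isUnit_map (d : Algebra.algebraMapSubmonoid (𝓞 K) (nonZeroDivisors ℤ)) :
      IsUnit (g d) := by
    obtain ⟨_, n, hn, rfl⟩ := d
    have hn0 : (n : ℚ) ≠ 0 := by exact_mod_cast nonZeroDivisors.ne_zero hn
    have : g (algebraMap ℤ (𝓞 K) n) = algebraMap ℚ L n := by simp
    rw [this]
    exact (IsUnit.mk0 _ hn0).map (algebraMap ℚ L)
  exact ⟨(IsLocalization.lift isUnit_map : K →+* L).toRatAlgHom, IsLocalization.lift_eq isUnit_map⟩

theorem exists_forall_eq_sum_mul_embedding {K : Type*} [Field K] [NumberField K]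
    (g : 𝓞 K →ₗ[ℤ] ℂ) :
    ∃ c : (K →+* ℂ) → ℂ, ∀ x, g x = ∑ σ : K →+* ℂ, c σ * σ (x : K) := by
  classical
  let b := RingOfIntegers.basis K
  let ℓ : ((K →+* ℂ) → ℂ) →ₗ[ℂ] ℂ :=
    (canonicalEmbedding.latticeBasis K).constr ℂ fun i => g (b i)
  have g_eq : g = ℓ.restrictScalars ℤ ∘ₗ
      ((canonicalEmbedding K).comp (algebraMap (𝓞 K) K)).toIntAlgHom.toLinearMap := by
    refine b.ext fun i => ?_
    have : canonicalEmbedding K (b i : K) = canonicalEmbedding.latticeBasis K i := by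
      rw [canonicalEmbedding.latticeBasis_apply, integralBasis_apply]
    change g (b i) = ℓ (canonicalEmbedding K (b i : K))
    rw [this, Module.Basis.constr_basis]
  refine ⟨fun σ => ℓ fun τ => if σ = τ then 1 else 0, fun x => ?_⟩
  rw [g_eq]
  refine (LinearMap.pi_apply_eq_sum_univ ℓ (canonicalEmbedding K (x : K))).trans ?_
  simp only [smul_eq_mul, mul_comm, canonicalEmbedding.apply_at]

theorem eq_of_forall_sum_mul_log_eq_zero {K : Type*} [Field K] [NumberField K]
    (n : InfinitePlace K → ℝ)
    (h : ∀ u : (𝓞 K)ˣ, ∑ w, n w * (w.mult * Real.log (w (u : K))) = 0)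
    (v w : InfinitePlace K) : n v = n w := by
  classical
  let w₀ : InfinitePlace K := Units.dirichletUnitTheorem.w₀
  let f : Units.dirichletUnitTheorem.logSpace K →ₗ[ℝ] ℝ :=
    ∑ w, (n w.1 - n w₀) • LinearMap.proj w
  have f_apply (x) : f x = ∑ w, (n w.1 - n w₀) * x w := by
    simp only [f, LinearMap.sum_apply, LinearMap.smul_apply, LinearMap.proj_apply, smul_eq_mul]
  have f_eq_zero : f = 0 := by
    refine LinearMap.ext_on (Units.dirichletUnitTheorem.unitLattice_span_eq_top K) ?_
    rintro _ ⟨u, -, rfl⟩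
    have sum_sub_eq_zero : ∑ w : InfinitePlace K, (n w - n w₀) *
        (w.mult * Real.log (w (u.toMul : K))) = 0 := by
      simp only [sub_mul, Finset.sum_sub_distrib, ← Finset.mul_sum, h, Units.sum_mult_mul_log,
        mul_zero, sub_zero]
    rw [Fintype.sum_eq_add_sum_subtype_ne _ w₀, sub_self, zero_mul, zero_add] at sum_sub_eq_zero
    rw [f_apply, LinearMap.zero_apply, ← sum_sub_eq_zero]
    rfl
  have eq_base (w : InfinitePlace K) : n w = n w₀ := by
    by_cases hw : w = w₀
    · rw [hw]
    · have := f_apply (Pi.single ⟨w, hw⟩ 1)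
      rw [f_eq_zero, LinearMap.zero_apply, Fintype.sum_eq_single ⟨w, hw⟩] at this
      · simpa only [Pi.single_eq_same, mul_one, eq_comm (a := (0 : ℝ)), sub_eq_zero] using this
      · intro w' hw'
        rw [Pi.single_eq_of_ne hw', mul_zero]
  rw [eq_base v, eq_base w]

theorem embedding_infinitePlace_mk {K : Type*} [Field K] [IsTotallyReal K] (φ : K →+* ℂ) :
    (InfinitePlace.mk φ).embedding = φ :=
  InfinitePlace.embedding_mk_eq_of_isReal (IsTotallyReal.complexEmbedding_isReal φ)

section TotallyReal

variable {K : Type*} [Field K] [NumberField K] [IsTotallyReal K]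

theorem eq_of_forall_sum_mul_log_norm_eq_zero (n : (K →+* ℂ) → ℝ)
    (h : ∀ u : (𝓞 K)ˣ, ∑ σ : K →+* ℂ, n σ * Real.log ‖σ (u : K)‖ = 0) (σ τ : K →+* ℂ) :
    n σ = n τ := by
  have mk_bijective : Function.Bijective (InfinitePlace.mk : (K →+* ℂ) → InfinitePlace K) :=
    Function.bijective_iff_has_inverse.mpr
      ⟨InfinitePlace.embedding, embedding_infinitePlace_mk, InfinitePlace.mk_embedding⟩
  have sum_places (u : (𝓞 K)ˣ) : ∑ w : InfinitePlace K,
      n w.embedding * (w.mult * Real.log (w (u : K))) = 0 := by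
    rw [← h u, eq_comm]
    refine Fintype.sum_bijective _ mk_bijective _ _ fun φ => ?_
    rw [embedding_infinitePlace_mk, IsTotallyReal.mult_eq, Nat.cast_one, one_mul,
      InfinitePlace.apply]
  simpa only [embedding_infinitePlace_mk] using
    eq_of_forall_sum_mul_log_eq_zero (n ·.embedding) sum_places (.mk σ) (.mk τ)

theorem add_eq_add_of_forall_prod_pow_eq {m m' : (K →+* ℂ) → ℕ}
    (h : ∀ u : (𝓞 K)ˣ, ∏ σ : K →+* ℂ, σ (u : K) ^ m σ = ∏ σ : K →+* ℂ, σ (u : K) ^ m' σ)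
    (σ τ : K →+* ℂ) : m σ + m' τ = m' σ + m τ := by
  have log_norm_prod (e : (K →+* ℂ) → ℕ) (u : (𝓞 K)ˣ) :
      Real.log ‖∏ σ : K →+* ℂ, σ (u : K) ^ e σ‖ =
        ∑ σ : K →+* ℂ, e σ * Real.log ‖σ (u : K)‖ := by
    simp only [norm_prod, norm_pow, ← Real.log_pow]
    exact Real.log_prod fun σ _ => pow_ne_zero _ (by simp)
  have := eq_of_forall_sum_mul_log_norm_eq_zero (fun σ : K →+* ℂ => (m σ : ℝ) - m' σ)
    (fun u => by
      simp only [sub_mul, Finset.sum_sub_distrib, ← log_norm_prod, h, sub_self]) σ τ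
  have : (m σ : ℝ) + m' τ = m' σ + m τ := by linarith
  exact_mod_cast this

theorem prod_pow_eq_of_forall_prod_pow_eq {R : Type*} [CommMonoid R] {m m' : (K →+* ℂ) → ℕ}
    (h : ∀ u : (𝓞 K)ˣ, ∏ σ : K →+* ℂ, σ (u : K) ^ m σ = ∏ σ : K →+* ℂ, σ (u : K) ^ m' σ)
    {y : (K →+* ℂ) → R} (hy : ∏ σ, y σ = 1) : ∏ σ, y σ ^ m σ = ∏ σ, y σ ^ m' σ := by
  obtain ⟨τ⟩ : Nonempty (K →+* ℂ) := inferInstance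
  have prod_pow_const (k : ℕ) : ∏ σ, y σ ^ k = 1 := by rw [Finset.prod_pow, hy, one_pow]
  calc ∏ σ, y σ ^ m σ = ∏ σ, y σ ^ (m σ + m' τ) := by
        simp only [pow_add, Finset.prod_mul_distrib, prod_pow_const, mul_one]
    _ = ∏ σ, y σ ^ (m' σ + m τ) := by
        simp only [add_eq_add_of_forall_prod_pow_eq h _ τ]
    _ = ∏ σ, y σ ^ m' σ := by
        simp only [pow_add, Finset.prod_mul_distrib, prod_pow_const, mul_one]

theorem eval_eq_zero_of_forall_eval_units_eq_zero {P : MvPolynomial (K →+* ℂ) ℂ}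
    (hP : ∀ u : (𝓞 K)ˣ, MvPolynomial.eval (fun σ : K →+* ℂ => σ (u : K)) P = 0)
    {y : (K →+* ℂ) → ℂ} (hy : ∏ σ, y σ = 1) : MvPolynomial.eval y P = 0 :=
  eval_eq_zero_of_forall_eval_monoidHom_eq_zero
    (fun σ : K →+* ℂ => (σ.comp (algebraMap (𝓞 K) K) : 𝓞 K →* ℂ).comp (Units.coeHom (𝓞 K))) hP
    fun _ _ h => prod_pow_eq_of_forall_prod_pow_eq h hy

theorem exists_embedding_forall_apply_eq_apply_one_mul {F : Type*} [Field F] [NumberField F]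
    (g : 𝓞 K →ₗ[ℤ] 𝓞 F) (hg : ∀ u : (𝓞 K)ˣ, IsUnit (g u)) (φ : F →ₐ[ℚ] ℂ) :
    ∃ σ : K →+* ℂ, ∀ x : 𝓞 K, φ (g x) = φ (g 1) * σ x := by
  have linear_forms (ψ : F →ₐ[ℚ] ℂ) := exists_forall_eq_sum_mul_embedding
    (((ψ : F →+* ℂ).comp (algebraMap (𝓞 F) F)).toIntAlgHom.toLinearMap ∘ₗ g)
  choose c hc using linear_forms
  replace hc (ψ : F →ₐ[ℚ] ℂ) (x : 𝓞 K) : ψ (g x) = ∑ σ : K →+* ℂ, c ψ σ * σ (x : K) := hc ψ x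
  let P : MvPolynomial (K →+* ℂ) ℂ :=
    (∏ ψ, ∑ σ, MvPolynomial.C (c ψ σ) * MvPolynomial.X σ) ^ 2 - 1
  have eval_P (y) : MvPolynomial.eval y P = (∏ ψ, ∑ σ, c ψ σ * y σ) ^ 2 - 1 := by
    simp only [P, map_sub, map_pow, map_prod, map_sum, map_mul, MvPolynomial.eval_C,
      MvPolynomial.eval_X, map_one]
  have eval_P_units (u : (𝓞 K)ˣ) : MvPolynomial.eval (fun σ : K →+* ℂ => σ (u : K)) P = 0 := by
    have norm_sq : Algebra.norm ℚ (g u : F) ^ 2 = 1 := by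
      rw [← sq_abs, ← RingOfIntegers.coe_norm, NumberField.isUnit_iff_norm.mp (hg u), one_pow]
    simp only [eval_P, ← hc]
    rw [← Algebra.norm_eq_prod_embeddings ℚ ℂ, ← map_pow, norm_sq, map_one, sub_self]
  have form_ne_zero (y : (K →+* ℂ) → ℂ) (hy : ∏ σ, y σ = 1) : ∑ σ, c φ σ * y σ ≠ 0 := by
    intro form_eq_zero
    have eval_eq_zero := eval_eq_zero_of_forall_eval_units_eq_zero eval_P_units hy
    rw [eval_P, Finset.prod_eq_zero (Finset.mem_univ φ) form_eq_zero] at eval_eq_zero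
    norm_num at eval_eq_zero
  obtain ⟨σ, hσ⟩ := exists_forall_sum_mul_eq_mul form_ne_zero
  have apply_eq (x : 𝓞 K) : φ (g x) = c φ σ * σ x := by
    rw [hc, hσ fun τ => τ x]
  refine ⟨σ, fun x => ?_⟩
  simp only [apply_eq, map_one, mul_one]

theorem map_one_mul_map_mul_of_numberField {F : Type*} [Field F] [NumberField F]
    (g : 𝓞 K →ₗ[ℤ] 𝓞 F) (hg : ∀ u : (𝓞 K)ˣ, IsUnit (g u)) (x y : 𝓞 K) :
    g 1 * g (x * y) = g x * g y := by
  let φ : F →ₐ[ℚ] ℂ := (Classical.arbitrary (F →+* ℂ)).toRatAlgHom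
  obtain ⟨σ, hσ⟩ := exists_embedding_forall_apply_eq_apply_one_mul g hg φ
  refine RingOfIntegers.coe_injective (φ.toRingHom.injective ?_)
  change φ ((g 1 * g (x * y) : 𝓞 F) : F) = φ ((g x * g y : 𝓞 F) : F)
  simp only [map_mul, hσ x, hσ y, hσ (x * y)]
  ring

theorem map_one_mul_map_mul_of_field {E : Type*} [Field E] [CharZero E]
    (g : 𝓞 K →ₗ[ℤ] integralClosure ℤ E) (hg : ∀ u : (𝓞 K)ˣ, IsUnit (g u)) (x y : 𝓞 K) :
    g 1 * g (x * y) = g x * g y := by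
  obtain ⟨F, _, hF⟩ := exists_intermediateField_forall_mem (k := ℚ)
    ((integralClosure ℤ E).val.toLinearMap ∘ₗ g) fun x => (g x).2.tower_top
  have : NumberField F := { }
  let i : F →ₐ[ℤ] E := F.val.restrictScalars ℤ
  let ι : 𝓞 F →ₐ[ℤ] integralClosure ℤ E := i.mapIntegralClosure
  have i_injective : Function.Injective i := Subtype.val_injective
  have ι_injective : Function.Injective ι := mapIntegralClosure_injective i_injective
  have ι_isLocalHom : IsLocalHom ι.toRingHom := isLocalHom_mapIntegralClosure i_injective
  have exists_lift (x : 𝓞 K) : ∃ z, ι z = g x :=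
    ⟨⟨⟨g x, hF x⟩, (isIntegral_algHom_iff i i_injective).mp (g x).2⟩, rfl⟩
  choose lift ι_lift using exists_lift
  let g' : 𝓞 K →ₗ[ℤ] 𝓞 F := (AddMonoidHom.mk' lift fun a b => ι_injective <| by
    simp only [map_add, ι_lift]).toIntLinearMap
  have lift_isUnit (u : (𝓞 K)ˣ) : IsUnit (g' u) := by
    refine IsUnit.of_map ι.toRingHom _ ?_
    exact (ι_lift u).symm ▸ hg u
  have lift_mul : lift 1 * lift (x * y) = lift x * lift y :=
    map_one_mul_map_mul_of_numberField g' lift_isUnit x y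
  simpa only [map_mul, ι_lift] using congrArg ι lift_mul

theorem ringHom_map_one_mul_map_mul {L E : Type*} [CommRing L] [Field E] [CharZero E] (π : L →+* E)
    (A : 𝓞 K →ₗ[ℤ] integralClosure ℤ L) (hA : ∀ u : (𝓞 K)ˣ, IsUnit (A u)) (x y : 𝓞 K) :
    π (A 1 * A (x * y)) = π (A x * A y) := by
  let π' : integralClosure ℤ L →ₐ[ℤ] integralClosure ℤ E := π.toIntAlgHom.mapIntegralClosure
  have mul_eq : π' (A 1 * A (x * y)) = π' (A x * A y) := by
    simp only [map_mul]
    exact map_one_mul_map_mul_of_field (π'.toLinearMap ∘ₗ A) (fun u => (hA u).map π') x y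
  exact congrArg Subtype.val mul_eq

theorem map_one_mul_map_mul_of_isReduced {L : Type*} [CommRing L] [IsReduced L] [Algebra ℚ L]
    (A : 𝓞 K →ₗ[ℤ] integralClosure ℤ L) (hA : ∀ u : (𝓞 K)ˣ, IsUnit (A u)) (x y : 𝓞 K) :
    A 1 * A (x * y) = A x * A y := by
  refine Subtype.ext (sub_eq_zero.mp (nilpotent_iff_mem_prime.mpr fun p _ => ?_).eq_zero)
  have : CharZero p.ResidueField := algebraRat.charZero _
  rw [← Ideal.algebraMap_residueField_eq_zero, map_sub, sub_eq_zero]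
  exact ringHom_map_one_mul_map_mul (algebraMap L p.ResidueField) A hA x y

end TotallyReal

theorem units_linear_map_general {K L : Type*} [Field K] [NumberField K] [IsTotallyReal K]
    [CommRing L] [Algebra ℚ L] [IsReduced L] (A : 𝓞 K →ₗ[ℤ] integralClosure ℤ L)
    (hA : ∀ x : 𝓞 K, IsUnit x → IsUnit (A x)) :
    ∃ (τ : K →ₐ[ℚ] L) (ε : (integralClosure ℤ L)ˣ),
      ∀ x : 𝓞 K, (A x : L) = ((ε : integralClosure ℤ L) : L) * τ (x : K) := by
  obtain ⟨f, hf⟩ := exists_algHom_forall_eq_map_one_mul A (hA 1 isUnit_one)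
    (map_one_mul_map_mul_of_isReduced A fun u => hA u u.isUnit)
  obtain ⟨τ, hτ⟩ := exists_ratAlgHom_extending ((integralClosure ℤ L).val.comp f).toRingHom
  refine ⟨τ, (hA 1 isUnit_one).unit, fun x => ?_⟩
  rw [hτ, IsUnit.unit_spec, hf x]
  rfl

/-- Units theorem: let `K` be a totally real number field and `L` a finite-dimensional
reduced commutative ℚ-algebra (an étale ℚ-algebra) with ring of integers the integral
closure of ℤ in `L`. Any ℤ-linear map `A : 𝓞 K → 𝓞 L` mapping units to units is of the
form `x ↦ ε·τ(x)` for a ℚ-algebra homomorphism `τ : K → L` and a unit `ε ∈ 𝓞 L ˣ`. -/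
theorem units_linear_map {K L : Type*} [Field K] [NumberField K]
    (hreal : ∀ φ : K →+* ℂ, ∀ x : K, (φ x).im = 0)
    [CommRing L] [Algebra ℚ L] [FiniteDimensional ℚ L] [IsReduced L]
    (A : 𝓞 K →ₗ[ℤ] (integralClosure ℤ L))
    (hA : ∀ x : 𝓞 K, IsUnit x → IsUnit (A x)) :
    ∃ (τ : K →ₐ[ℚ] L) (ε : (integralClosure ℤ L)ˣ),
      ∀ x : 𝓞 K, (A x : L) = ((ε : integralClosure ℤ L) : L) * τ (x : K) := by
  have := isTotallyReal_of_forall_im_eq_zero hreal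
  exact units_linear_map_general A hA
end

section
/- Let K be a totally real number field of degree n with distinct embeddings σ_1, …, σ_n : K → ℂ, and let U = {ε ∈ 𝓞_K^× : ∏_{i=1}^n σ_i(ε) = 1} be the group of units of norm 1. Let σ : K → ℂ^n be the map x ↦ (σ_1(x), …, σ_n(x)). Then σ(U) is Zariski dense in W = {x ∈ ℂ^n : ∏_{i=1}^n x_i = 1}: for every polynomial f ∈ ℂ[X_1, …, X_n], if f(σ(ε)) = 0 for all ε ∈ U, then f(x) = 0 for all x ∈ ℂ^n with ∏_{i=1}^n x_i = 1. -/
/-!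
The monomials `x ↦ ∏ᵢ xᵢ ^ mᵢ` restrict to characters of any multiplicative monoid `S` of points of
affine space, and distinct characters are linearly independent (Dedekind). So the vanishing of a
polynomial on `S` splits according to the characters, and the Zariski closure of `S` is cut out by
the binomials that vanish on `S`. When `S` is the image of the units of a totally real field, taking
logarithms of absolute values turns such a binomial into a linear relation on the log unit lattice.
By Dirichlet's unit theorem the only relation is that the sum of all the coordinates is zero, so
every binomial in question follows from `∏ᵢ xᵢ = 1`. Finite-index subgroups of units satisfy the
same relations, since each unit has a power in the subgroup.
-/

open NumberField

section Binomials

variable {ι R : Type*}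

/-- The monomial with exponent vector `m`, as a multiplicative character of affine space. The
index type may be infinite, as `m` has finite support. -/
noncomputable def monomialHom [CommMonoid R] (m : ι →₀ ℕ) : (ι → R) →* R where
  toFun x := m.prod fun i k => x i ^ k
  map_one' := by simp
  map_mul' x y := by simp [mul_pow]

theorem monomialHom_apply [CommMonoid R] [Fintype ι] (m : ι →₀ ℕ) (x : ι → R) :
    monomialHom m x = ∏ i, x i ^ m i :=
  m.prod_fintype _ fun i => pow_zero (x i)

theorem eval_eq_sum_monomialHom [CommSemiring R] (x : ι → R) (f : MvPolynomial ι R) :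
    MvPolynomial.eval x f = ∑ m ∈ f.support, f.coeff m * monomialHom m x :=
  MvPolynomial.eval_eq x f

theorem eval_eq_zero_of_monomialHom_eq [CommRing R] [IsDomain R] {S : Submonoid (ι → R)}
    {f : MvPolynomial ι R} (hf : ∀ s ∈ S, MvPolynomial.eval s f = 0) {x : ι → R}
    (hx : ∀ m m' : ι →₀ ℕ, (∀ s ∈ S, monomialHom m s = monomialHom m' s) →
      monomialHom m x = monomialHom m' x) :
    MvPolynomial.eval x f = 0 := by
  let χ (m : ι →₀ ℕ) : S →* R := (monomialHom m).comp S.subtype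
  let c : (S →* R) →₀ R := ∑ m ∈ f.support, Finsupp.single (χ m) (f.coeff m)
  have hc : c = 0 := by
    refine linearIndependent_iff.1 (linearIndependent_monoidHom S R) c ?_
    ext s
    simpa [c, χ, eval_eq_sum_monomialHom] using hf s s.2
  -- By `hx`, evaluation of monomials at `x` depends only on the character `χ m`.
  obtain ⟨g, hg⟩ : ∃ g : (S →* R) → R, (fun m => monomialHom m x) = g ∘ χ :=
    (Function.factorsThrough_iff _).1 fun m m' h =>
      hx m m' fun s hs => DFunLike.congr_fun h ⟨s, hs⟩
  calc MvPolynomial.eval x f = ∑ m ∈ f.support, f.coeff m * g (χ m) := by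
        rw [eval_eq_sum_monomialHom]
        exact Finset.sum_congr rfl fun m _ => congrArg _ (congrFun hg m)
    _ = Finsupp.linearCombination R g c := by simp [c]
    _ = 0 := by rw [hc, map_zero]

theorem monomialHom_eq_of_prod_eq_one [CommMonoid R] [Fintype ι] {m m' : ι →₀ ℕ}
    (h : ∀ i j, m i + m' j = m' i + m j) {x : ι → R} (hx : ∏ i, x i = 1) :
    monomialHom m x = monomialHom m' x := by
  have prod_pow_add (a : ι →₀ ℕ) (k : ℕ) : ∏ i, x i ^ (a i + k) = monomialHom a x := by
    simp only [pow_add, Finset.prod_mul_distrib, Finset.prod_pow, hx, one_pow, mul_one,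
      monomialHom_apply]
  cases isEmpty_or_nonempty ι with
  | inl _ => simp only [monomialHom_apply, Finset.univ_eq_empty, Finset.prod_empty]
  | inr hι =>
    obtain ⟨j⟩ := hι
    rw [← prod_pow_add m (m' j), ← prod_pow_add m' (m j)]
    simp only [h _ j]

theorem log_norm_monomialHom {𝕜 : Type*} [NormedField 𝕜] [Fintype ι] (m : ι →₀ ℕ) {x : ι → 𝕜}
    (hx : ∀ i, x i ≠ 0) :
    Real.log ‖monomialHom m x‖ = ∑ i, m i * Real.log ‖x i‖ := by
  simp only [monomialHom_apply, norm_prod, norm_pow]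
  rw [Real.log_prod fun i _ => pow_ne_zero _ (norm_ne_zero_iff.2 (hx i))]
  simp only [Real.log_pow]

end Binomials

section NumberField

variable {K : Type*} [Field K]

theorem isTotallyReal_of_im_eq_zero (h : ∀ (φ : K →+* ℂ) (x : K), (φ x).im = 0) :
    IsTotallyReal K where
  isReal w := by
    rw [InfinitePlace.isReal_iff, ComplexEmbedding.isReal_iff]
    exact RingHom.ext fun x => Complex.conj_eq_iff_im.2 (h _ x)

theorem bijective_infinitePlace_mk [IsTotallyReal K] :
    Function.Bijective (InfinitePlace.mk : (K →+* ℂ) → InfinitePlace K) := by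
  refine ⟨fun φ ψ h => ?_, fun w => ⟨w.embedding, w.mk_embedding⟩⟩
  have hφ := ComplexEmbedding.isReal_iff.1 (IsTotallyReal.complexEmbedding_isReal φ)
  simpa [hφ] using InfinitePlace.mk_eq_iff.1 h

variable {ι : Type*} {σ : ι → K →+* ℂ}

variable (σ) in
/-- The map `u ↦ (σᵢ(u))ᵢ` from the units of `K` to affine space, as a monoid homomorphism. -/
def unitPoint : (𝓞 K)ˣ →* ι → ℂ :=
  (((RingHom.pi σ).comp (algebraMap (𝓞 K) K) : 𝓞 K →+* ι → ℂ) : 𝓞 K →* ι → ℂ).comp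
    (Units.coeHom (𝓞 K))

theorem unitPoint_apply (u : (𝓞 K)ˣ) (i : ι) : unitPoint σ u i = σ i (u : K) :=
  rfl

variable [NumberField K]

theorem eq_of_forall_unit_sum_mul_log_eq_zero {a : InfinitePlace K → ℝ}
    (ha : ∀ u : (𝓞 K)ˣ, ∑ w, a w * (w.mult * Real.log (w (u : K))) = 0)
    (w w' : InfinitePlace K) : a w = a w' := by
  classical
  let w₀ : InfinitePlace K := Units.dirichletUnitTheorem.w₀
  suffices h : ∀ w, a w = a w₀ from (h w).trans (h w').symm
  let L : Units.dirichletUnitTheorem.logSpace K →ₗ[ℝ] ℝ :=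
    Fintype.linearCombination ℝ fun v => a v - a w₀
  have hL : L = 0 := by
    refine LinearMap.ext_on (Units.dirichletUnitTheorem.unitLattice_span_eq_top K) ?_
    rintro _ ⟨u, -, rfl⟩
    have hu : ∑ v : InfinitePlace K, (a v - a w₀) * (v.mult * Real.log (v (u.toMul : K))) = 0 := by
      simp only [sub_mul, Finset.sum_sub_distrib, ← Finset.mul_sum, ha, Units.sum_mult_mul_log,
        mul_zero, sub_zero]
    rw [Fintype.sum_eq_add_sum_subtype_ne _ w₀, sub_self, zero_mul, zero_add] at hu
    exact (Finset.sum_congr rfl fun v _ => mul_comm _ _).trans hu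
  intro w
  by_cases hw : w = w₀
  · rw [hw]
  · have := LinearMap.congr_fun hL (Pi.single ⟨w, hw⟩ 1)
    simpa [L, sub_eq_zero] using this

variable (K) in
/-- The units of norm one, as the kernel of the norm `(𝓞 K)ˣ →* ℤˣ`. -/
noncomputable def normOneUnits : Subgroup (𝓞 K)ˣ :=
  (Units.map (Algebra.norm ℤ : 𝓞 K →* ℤ)).ker

instance : (normOneUnits K).FiniteIndex :=
  Subgroup.finiteIndex_ker _

theorem prod_embeddings_eq_norm [Fintype ι] (hσ : Function.Bijective σ) (x : K) :
    ∏ i, σ i x = Algebra.norm ℚ x := by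
  rw [← eq_ratCast (algebraMap ℚ ℂ), Algebra.norm_eq_prod_embeddings ℚ ℂ]
  exact Fintype.prod_bijective _ ((RingHom.equivRatAlgHom K ℂ).bijective.comp hσ) _ _
    fun i => by simp

theorem mem_normOneUnits_iff [Fintype ι] (hσ : Function.Bijective σ) {ε : (𝓞 K)ˣ} :
    ε ∈ normOneUnits K ↔ ∏ i, σ i (ε : K) = 1 := by
  rw [prod_embeddings_eq_norm hσ, ← Algebra.coe_norm_int, normOneUnits, MonoidHom.mem_ker,
    Units.ext_iff]
  simp only [Units.coe_map, Units.val_one]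
  norm_cast

theorem add_eq_add_of_monomialHom_unitPoint_eq [IsTotallyReal K] (hσ : Function.Bijective σ)
    (H : Subgroup (𝓞 K)ˣ) [H.FiniteIndex] {m m' : ι →₀ ℕ}
    (h : ∀ u ∈ H, monomialHom m (unitPoint σ u) = monomialHom m' (unitPoint σ u)) (i j : ι) :
    m i + m' j = m' i + m j := by
  have : Fintype ι := Fintype.ofInjective σ hσ.injective
  let e : ι ≃ InfinitePlace K := Equiv.ofBijective _ (bijective_infinitePlace_mk.comp hσ)
  have sum_log_eq (u : (𝓞 K)ˣ) :
      ∑ i, m i * Real.log ‖σ i (u : K)‖ = ∑ i, m' i * Real.log ‖σ i (u : K)‖ := by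
    obtain ⟨k, hk, -, hu⟩ := Subgroup.exists_pow_mem_of_index_ne_zero H.index_ne_zero_of_finite u
    have hne (i : ι) : unitPoint σ u i ≠ 0 := by simp [unitPoint_apply]
    have hlog := congrArg (fun z : ℂ => Real.log ‖z‖) (h _ hu)
    simp only [map_pow, norm_pow, Real.log_pow, log_norm_monomialHom _ hne] at hlog
    exact mul_left_cancel₀ (Nat.cast_ne_zero.2 hk.ne') hlog
  let a (w : InfinitePlace K) : ℝ := m (e.symm w) - m' (e.symm w)
  have ha_apply (i : ι) : a (e i) = m i - m' i := by simp only [a, e.symm_apply_apply]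
  have he_apply (i : ι) (x : K) : e i x = ‖σ i x‖ := rfl
  have ha (u : (𝓞 K)ˣ) : ∑ w, a w * (w.mult * Real.log (w (u : K))) = 0 := by
    simp only [← e.sum_comp, ha_apply, he_apply, IsTotallyReal.mult_eq, Nat.cast_one, one_mul,
      sub_mul, Finset.sum_sub_distrib, sum_log_eq, sub_self]
  have hij := eq_of_forall_unit_sum_mul_log_eq_zero ha (e i) (e j)
  rw [ha_apply, ha_apply, sub_eq_sub_iff_add_eq_add, add_comm (m j : ℝ)] at hij
  exact_mod_cast hij

theorem units_zariski_dense_general [IsTotallyReal K] [Fintype ι] (hσ : Function.Bijective σ)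
    (H : Subgroup (𝓞 K)ˣ) [H.FiniteIndex] (f : MvPolynomial ι ℂ)
    (hf : ∀ ε ∈ H, MvPolynomial.eval (fun i => σ i (ε : K)) f = 0)
    (x : ι → ℂ) (hx : ∏ i, x i = 1) : MvPolynomial.eval x f = 0 := by
  refine eval_eq_zero_of_monomialHom_eq (S := H.toSubmonoid.map (unitPoint σ)) ?_ ?_
  · rintro _ ⟨ε, hε, rfl⟩
    exact hf ε hε
  · intro m m' h
    exact monomialHom_eq_of_prod_eq_one (add_eq_add_of_monomialHom_unitPoint_eq hσ H fun u hu =>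
      h _ (Submonoid.mem_map_of_mem _ hu)) hx

end NumberField

/-- Zariski density of the norm-one units of a totally real number field in the
hypersurface `W = {x ∈ ℂⁿ : x₁⋯xₙ = 1}`: any polynomial vanishing on the image of the
norm-one unit group under the embedding `x ↦ (σ₁(x), …, σₙ(x))` vanishes on all of
`W`. -/
theorem units_zariski_dense {K : Type*} [Field K] [NumberField K] (n : ℕ)
    (hn : Module.finrank ℚ K = n)
    (σ : Fin n → (K →+* ℂ)) (hσ : Function.Bijective σ)
    (hreal : ∀ φ : K →+* ℂ, ∀ x : K, (φ x).im = 0)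
    (f : MvPolynomial (Fin n) ℂ)
    (hf : ∀ ε : (𝓞 K)ˣ, (∏ i, σ i ((ε : 𝓞 K) : K)) = 1 →
      MvPolynomial.eval (fun i => σ i ((ε : 𝓞 K) : K)) f = 0) :
    ∀ x : Fin n → ℂ, (∏ i, x i) = 1 → MvPolynomial.eval x f = 0 :=
  have := isTotallyReal_of_im_eq_zero hreal
  units_zariski_dense_general hσ (normOneUnits K) f
    fun ε hε => hf ε ((mem_normOneUnits_iff hσ).1 hε)
end
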